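/- Let n=(n₁,n₂,n₃)∈ℤ³ with all nᵢ≥1, let △ be the triangle of G with vertices (0,0), (1,0), (1,1), and let △' be the adjacent triangle with vertices (0,0), (0,1), (1,1), so that △̄∩△̄' is the type-3 edge from (0,0) to (1,1). If f ∈ V_n is divisible by (x−y)^{n₁+n₂−1} in ℝ[x,y], then λ_△^β(f) = 0 for every translate β ∈ B_n(△̂) ∩ B_n(△̂'). -/

import Mathlib

/- ## The three-directional (type-I) grid -/

noncomputable section

open MvPolynomial Set Function

/-- Points of the plane. -/
abbrev Pt := ℝ × ℝ

/-- Bivariate real polynomials `ℝ[x,y]`. -/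
abbrev BPoly := MvPolynomial (Fin 2) ℝ

/-- Evaluation of a bivariate polynomial at a point of the plane. -/
def evalP (q : BPoly) (p : Pt) : ℝ := MvPolynomial.eval ![p.1, p.2] q

/-- Triangles of the three-directional grid `G`:  `⟨v, false⟩` is the "lower"
triangle with vertices `v, v+(1,0), v+(1,1)`, and `⟨v, true⟩` is the "upper"
triangle with vertices `v, v+(0,1), v+(1,1)`. -/
structure Tri where
  v : ℤ × ℤ
  up : Bool
deriving DecidableEq

namespace Tri

/-- The open triangle in the plane realizing a combinatorial triangle. -/
def toSet (T : Tri) : Set Pt :=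
  if T.up then
    {p | (T.v.1 : ℝ) < p.1 ∧ p.1 - (T.v.1 : ℝ) < p.2 - (T.v.2 : ℝ) ∧ p.2 < (T.v.2 : ℝ) + 1}
  else
    {p | (T.v.2 : ℝ) < p.2 ∧ p.2 - (T.v.2 : ℝ) < p.1 - (T.v.1 : ℝ) ∧ p.1 < (T.v.1 : ℝ) + 1}

/-- The closed triangle. -/
def cl (T : Tri) : Set Pt := closure T.toSet

/-- The three lattice vertices of a triangle. -/
def vertices (T : Tri) : Finset (ℤ × ℤ) :=
  if T.up then {T.v, (T.v.1, T.v.2 + 1), (T.v.1 + 1, T.v.2 + 1)}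
  else {T.v, (T.v.1 + 1, T.v.2), (T.v.1 + 1, T.v.2 + 1)}

end Tri

/-- Edges of the grid: a lattice point together with a direction type
(`0 ↦ e₁ = (1,0)`, `1 ↦ e₂ = (0,1)`, `2 ↦ e₃ = (1,1)`); the edge of type `i`
at `v` joins `v` to `v + eᵢ`. -/
abbrev Edge := (ℤ × ℤ) × Fin 3

/-- The three direction vectors `e₁, e₂, e₃`. -/
def dirZ : Fin 3 → ℤ × ℤ := ![(1, 0), (0, 1), (1, 1)]

/-- The three edges of a triangle. -/
def Tri.edges (T : Tri) : Finset Edge :=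
  if T.up then {((T.v.1, T.v.2 + 1), 0), (T.v, 1), (T.v, 2)}
  else {(T.v, 0), ((T.v.1 + 1, T.v.2), 1), (T.v, 2)}

/-- The open segment realizing an edge. -/
def Edge.seg (ε : Edge) : Set Pt :=
  {p | ∃ t : ℝ, 0 < t ∧ t < 1 ∧
    p = ((ε.1.1 : ℝ) + t * ((dirZ ε.2).1 : ℝ), (ε.1.2 : ℝ) + t * ((dirZ ε.2).2 : ℝ))}

/-- `M*`: the union of the closed triangles of a multicell domain. -/
def Mstar (M : Finset Tri) : Set Pt := ⋃ T ∈ M, T.cl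

/-- `ℙ(M,V)`: continuous functions on `M*` whose restriction to each triangle
of `M` is the restriction of a polynomial in `V`. -/
def PP (M : Finset Tri) (V : Set BPoly) : Set (Pt → ℝ) :=
  {f | ContinuousOn f (Mstar M) ∧ ∀ T ∈ M, ∃ q ∈ V, EqOn f (evalP q) T.toSet}

/-- The diamond of an edge: union of the closed triangles of `M` having `ε`
as an edge. -/
def diamond (M : Finset Tri) (ε : Edge) : Set Pt :=
  ⋃ T ∈ M.filter (fun T => ε ∈ T.edges), T.cl

/-- The spline space with edge smoothness `d` on the multicell domain `M`:
piecewise polynomials (pieces from `V`) which are `C^{dᵢ}` on the diamond of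
every edge of type `i` of `M`. -/
def SplineSpace (M : Finset Tri) (V : Set BPoly) (d : Fin 3 → ℕ) : Set (Pt → ℝ) :=
  {f | f ∈ PP M V ∧
    ∀ ε : Edge, (∃ T ∈ M, ε ∈ T.edges) → ContDiffOn ℝ (d ε.2) f (diamond M ε)}

/-- Directional derivative of a polynomial along an integer vector. -/
def dirD (e : ℤ × ℤ) (q : BPoly) : BPoly :=
  (e.1 : ℝ) • MvPolynomial.pderiv (0 : Fin 2) q + (e.2 : ℝ) • MvPolynomial.pderiv (1 : Fin 2) q

/-- The mixed directional derivative operator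
`D_s = (∂_{e₁})^{s₁} (∂_{e₂})^{s₂} (∂_{e₃})^{s₃}`. -/
def Dmix (s : Fin 3 → ℕ) (q : BPoly) : BPoly :=
  (dirD (dirZ 0))^[s 0] ((dirD (dirZ 1))^[s 1] ((dirD (dirZ 2))^[s 2] q))

/-- The index sets `Iᵢ^d`; `I₁^d = {s | s₂+s₃ ≤ d₁}` and cyclically. -/
def Iset (d : Fin 3 → ℕ) (i : Fin 3) : Set (Fin 3 → ℕ) :=
  {s | s (i + 1) + s (i + 2) ≤ d i}

/-- Two triangles of the grid are adjacent if they are distinct and share an edge. -/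
def Adj (T T' : Tri) : Prop := T ≠ T' ∧ ∃ ε : Edge, ε ∈ T.edges ∧ ε ∈ T'.edges

/-- `c` is an edge-connected chain of length `m` from `T` to `T'`. -/
def TriIsChain (T T' : Tri) (m : ℕ) (c : ℕ → Tri) : Prop :=
  c 0 = T ∧ c m = T' ∧ ∀ k < m, Adj (c k) (c (k + 1))

/-- The set of types of the edges crossed by a chain. -/
def chainTypes (m : ℕ) (c : ℕ → Tri) : Set (Fin 3) :=
  {i | ∃ k < m, ∃ ε : Edge, ε.2 = i ∧ ε ∈ (c k).edges ∧ ε ∈ (c (k + 1)).edges}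

/-- Minimal length of an edge-connected chain between two triangles. -/
def minLen (T T' : Tri) : ℕ := sInf {m | ∃ c, TriIsChain T T' m c}

/-- The smoothness type `SmType(△,△')`: the types of the edges crossed by a
shortest edge-connected chain from `△` to `△'`. -/
def SmType (T T' : Tri) : Set (Fin 3) :=
  {i | ∃ c, TriIsChain T T' (minLen T T') c ∧ i ∈ chainTypes (minLen T T') c}

/-- `q` is the polynomial piece of `f` on the triangle `T`. -/
def IsPiece (f : Pt → ℝ) (T : Tri) (q : BPoly) : Prop := EqOn f (evalP q) T.toSet

/-- The strongly regular spline space `Ŝ^d(M,V)`: piecewise polynomials such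
that for any two triangles of `M` with intersecting closures, the derivatives
`D_s`, `s ∈ ⋂_{i ∈ SmType(△,△')} Iᵢ^d`, of the two polynomial pieces agree on the
intersection of the closures (i.e. `D_s f` is continuous there). -/
def StrongSpline (M : Finset Tri) (V : Set BPoly) (d : Fin 3 → ℕ) : Set (Pt → ℝ) :=
  {f | f ∈ PP M V ∧
    ∀ T ∈ M, ∀ T' ∈ M, (T.cl ∩ T'.cl).Nonempty →
      ∀ s : Fin 3 → ℕ, (∀ i ∈ SmType T T', s ∈ Iset d i) →
        ∀ q q' : BPoly, IsPiece f T q → IsPiece f T' q' →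
          ∀ x ∈ T.cl ∩ T'.cl, evalP (Dmix s q) x = evalP (Dmix s q') x}

/-- Kissing triangles: the closures intersect in exactly one point. -/
def Kissing (T T' : Tri) : Prop := ∃ p : Pt, T.cl ∩ T'.cl = {p}

/-- An over-concave vertex of `M`: exactly one triangle of `star(ν)` is
missing from `M`. -/
def OverConcave (M : Finset Tri) (ν : ℤ × ℤ) : Prop :=
  ∃! T : Tri, ν ∈ T.vertices ∧ T ∉ M

/- ## Type-I box splines -/

/-- The Courant hat function `B_{(1,1,1)}`: the piecewise linear function on
`G` supported on `star((1,1))` with value `1` at `(1,1)` and `0` at all other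
lattice points. -/
def hat (p : Pt) : ℝ :=
  max 0 (min (min (min p.1 p.2) (min (2 - p.1) (2 - p.2)))
             (min (1 - (p.1 - p.2)) (1 + (p.1 - p.2))))

/-- The type-I box spline `B_{(n₁,n₂,n₃)}`, defined by repeated directional
convolution starting from the Courant hat function (the result is independent
of the order of the convolutions); junk value `0` if some `nᵢ = 0`. -/
noncomputable def boxN : ℕ → ℕ → ℕ → Pt → ℝ
  | 0, _, _, _ => 0
  | _ + 1, 0, _, _ => 0
  | _ + 1, _ + 1, 0, _ => 0
  | 1, 1, 1, p => hat p
  | a + 2, b + 1, c + 1, p =>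
      ∫ t in (0:ℝ)..1, boxN (a + 1) (b + 1) (c + 1) (p.1 - t, p.2)
  | 1, b + 2, c + 1, p =>
      ∫ t in (0:ℝ)..1, boxN 1 (b + 1) (c + 1) (p.1, p.2 - t)
  | 1, 1, c + 2, p =>
      ∫ t in (0:ℝ)..1, boxN 1 1 (c + 1) (p.1 - t, p.2 - t)
  termination_by a b c _ => a + b + c
  decreasing_by all_goals omega

/-- The translate `B_n(· - w)` of the box spline. -/
def trBox (n₁ n₂ n₃ : ℕ) (w : ℤ × ℤ) (p : Pt) : ℝ :=
  boxN n₁ n₂ n₃ (p.1 - (w.1 : ℝ), p.2 - (w.2 : ℝ))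

/-- `Supp_n(△̂)`: lattice translates of `B_n` that do not vanish identically
on the triangle `T`. -/
def activeSet (n₁ n₂ n₃ : ℕ) (T : Tri) : Set (ℤ × ℤ) :=
  {w | ¬ ∀ p ∈ T.toSet, trBox n₁ n₂ n₃ w p = 0}

/-- `c` is the coefficient vector of the polynomial `q` with respect to the
active box-spline translates on `T`:  `q|_T = Σ_β λ_T^β(q)·β|_T`. -/
def Represents (n₁ n₂ n₃ : ℕ) (T : Tri) (q : BPoly) (c : (ℤ × ℤ) →₀ ℝ) : Prop :=
  ↑c.support ⊆ activeSet n₁ n₂ n₃ T ∧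
    ∀ p ∈ T.toSet, evalP q p = c.sum fun w a => a * trBox n₁ n₂ n₃ w p

/-- `V_n` (relative to the triangle `T`): polynomials whose restriction to `T`
is a linear combination of the active box-spline translates on `T`. -/
def VSpace (n₁ n₂ n₃ : ℕ) (T : Tri) : Set BPoly :=
  {q | ∃ c, Represents n₁ n₂ n₃ T q c}


theorem boxN_111 (p : Pt) : boxN 1 1 1 p = hat p := by rw [boxN]

theorem boxN_s1 (i j k : ℕ) (x y : ℝ) : boxN (i+2) (j+1) (k+1) (x, y) =
    ∫ t in (0:ℝ)..1, boxN (i+1) (j+1) (k+1) (x - t, y) := by rw [boxN]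

theorem boxN_s2 (j k : ℕ) (x y : ℝ) : boxN 1 (j+2) (k+1) (x, y) =
    ∫ t in (0:ℝ)..1, boxN 1 (j+1) (k+1) (x, y - t) := by rw [boxN]

theorem boxN_s3 (k : ℕ) (x y : ℝ) : boxN 1 1 (k+2) (x, y) =
    ∫ t in (0:ℝ)..1, boxN 1 1 (k+1) (x - t, y - t) := by rw [boxN]

/-- Induction principle along the recursion of `boxN`. -/
theorem box_ind {P : ℕ → ℕ → ℕ → Prop} (h0 : P 0 0 0)
    (h3 : ∀ k, P 0 0 k → P 0 0 (k+1)) (h2 : ∀ j k, P 0 j k → P 0 (j+1) k)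
    (h1 : ∀ i j k, P i j k → P (i+1) j k) (i j k : ℕ) : P i j k := by
  induction i with
  | succ i ih => exact h1 _ _ _ ih
  | zero =>
    induction j with
    | succ j ih => exact h2 _ _ ih
    | zero =>
      induction k with
      | zero => exact h0
      | succ k ih => exact h3 _ ih

theorem box_cont (i j k : ℕ) : Continuous (boxN (i+1) (j+1) (k+1)) := by
  refine box_ind (P := fun i j k => Continuous (boxN (i+1) (j+1) (k+1))) ?_ ?_ ?_ ?_ i j k
  · have : boxN (0+1) (0+1) (0+1) = hat := funext fun p => boxN_111 p
    rw [this]; unfold hat; fun_prop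
  · intro k ih
    have : boxN (0+1) (0+1) (k+1+1) = fun p : Pt =>
        ∫ t in (0:ℝ)..1, boxN 1 1 (k+1) (p.1 - t, p.2 - t) := funext fun p => boxN_s3 k p.1 p.2
    rw [this]
    apply intervalIntegral.continuous_parametric_intervalIntegral_of_continuous'
    exact ih.comp (by fun_prop : Continuous fun q : Pt × ℝ => ((q.1.1 - q.2, q.1.2 - q.2) : Pt))
  · intro j k ih
    have : boxN (0+1) (j+1+1) (k+1) = fun p : Pt =>
        ∫ t in (0:ℝ)..1, boxN 1 (j+1) (k+1) (p.1, p.2 - t) := funext fun p => boxN_s2 j k p.1 p.2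
    rw [this]
    apply intervalIntegral.continuous_parametric_intervalIntegral_of_continuous'
    exact ih.comp (by fun_prop : Continuous fun q : Pt × ℝ => ((q.1.1, q.1.2 - q.2) : Pt))
  · intro i j k ih
    have : boxN (i+1+1) (j+1) (k+1) = fun p : Pt =>
        ∫ t in (0:ℝ)..1, boxN (i+1) (j+1) (k+1) (p.1 - t, p.2) :=
      funext fun p => boxN_s1 i j k p.1 p.2
    rw [this]
    apply intervalIntegral.continuous_parametric_intervalIntegral_of_continuous'
    exact ih.comp (by fun_prop : Continuous fun q : Pt × ℝ => ((q.1.1 - q.2, q.1.2) : Pt))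

theorem int_zero {g : ℝ → ℝ} (h : ∀ t, 0 ≤ t → t ≤ 1 → g t = 0) :
    ∫ t in (0:ℝ)..1, g t = 0 := by
  rw [intervalIntegral.integral_congr (g := fun _ => (0:ℝ))]
  · simp
  · intro t ht
    rw [uIcc_of_le zero_le_one] at ht
    exact h t ht.1 ht.2

theorem hat_zero (x y : ℝ) (h : x ≤ 0 ∨ 2 ≤ x ∨ y ≤ 0 ∨ 2 ≤ y ∨ 1 ≤ x - y ∨ x - y ≤ -1) :
    hat (x, y) = 0 := by
  unfold hat
  apply max_eq_left
  simp only [min_le_iff]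
  rcases h with h | h | h | h | h | h
  · left; left; left; exact h
  · left; right; left; linarith
  · left; left; right; exact h
  · left; right; right; linarith
  · right; left; linarith
  · right; right; linarith

theorem box_zero (i j k : ℕ) : ∀ x y : ℝ,
    (x ≤ 0 ∨ (i + k + 2 : ℝ) ≤ x ∨ y ≤ 0 ∨ (j + k + 2 : ℝ) ≤ y ∨
      (i + 1 : ℝ) ≤ x - y ∨ x - y ≤ -(j + 1 : ℝ)) → boxN (i+1) (j+1) (k+1) (x, y) = 0 := by
  refine box_ind (P := fun i j k => ∀ x y : ℝ,
    (x ≤ 0 ∨ (i + k + 2 : ℝ) ≤ x ∨ y ≤ 0 ∨ (j + k + 2 : ℝ) ≤ y ∨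
      (i + 1 : ℝ) ≤ x - y ∨ x - y ≤ -(j + 1 : ℝ)) → boxN (i+1) (j+1) (k+1) (x, y) = 0)
      ?_ ?_ ?_ ?_ i j k
  · intro x y h
    rw [boxN_111]
    apply hat_zero
    simp only [Nat.cast_zero, zero_add] at h
    exact h
  · intro k ih x y h
    rw [boxN_s3]
    apply int_zero
    intro t h0 h1
    apply ih
    push_cast at h ⊢
    rcases h with h | h | h | h | h | h
    · left; linarith
    · right; left; linarith
    · right; right; left; linarith
    · right; right; right; left; linarith
    · right; right; right; right; left; linarith
    · right; right; right; right; right; linarith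
  · intro j k ih x y h
    rw [boxN_s2]
    apply int_zero
    intro t h0 h1
    apply ih
    push_cast at h ⊢
    rcases h with h | h | h | h | h | h
    · left; linarith
    · right; left; linarith
    · right; right; left; linarith
    · right; right; right; left; linarith
    · right; right; right; right; left; linarith
    · right; right; right; right; right; linarith
  · intro i j k ih x y h
    rw [boxN_s1]
    apply int_zero
    intro t h0 h1
    apply ih
    push_cast at h ⊢
    rcases h with h | h | h | h | h | h
    · left; linarith
    · right; left; linarith
    · right; right; left; linarith
    · right; right; right; left; linarith
    · right; right; right; right; left; linarith
    · right; right; right; right; right; linarith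

/-- Univariate cardinal B-splines, of order `k+2`. -/
def NB : ℕ → ℝ → ℝ
  | 0, y => max 0 (min y (2 - y))
  | k + 1, y => ∫ t in (0:ℝ)..1, NB k (y - t)

theorem NB_cont (k : ℕ) : Continuous (NB k) := by
  induction k with
  | zero =>
    have : NB 0 = fun y => max 0 (min y (2 - y)) := funext fun y => by rw [NB]
    rw [this]; fun_prop
  | succ k ih =>
    have : NB (k+1) = fun y => ∫ t in (0:ℝ)..1, NB k (y - t) := funext fun y => by rw [NB]
    rw [this]
    apply intervalIntegral.continuous_parametric_intervalIntegral_of_continuous'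
    exact ih.comp (by fun_prop : Continuous fun q : ℝ × ℝ => q.1 - q.2)

theorem NB_zero (k : ℕ) : ∀ y : ℝ, (y ≤ 0 ∨ (k + 2 : ℝ) ≤ y) → NB k y = 0 := by
  induction k with
  | zero =>
    intro y h
    unfold NB
    apply max_eq_left
    simp only [min_le_iff]
    norm_num at h
    rcases h with h | h
    · left; exact h
    · right; linarith
  | succ k ih =>
    intro y h
    unfold NB
    apply int_zero
    intro t h0 h1
    apply ih
    push_cast at h ⊢
    rcases h with h | h
    · left; linarith
    · right; linarith

theorem int_congr' {g h : ℝ → ℝ} (H : ∀ t, 0 ≤ t → t ≤ 1 → g t = h t) :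
    ∫ t in (0:ℝ)..1, g t = ∫ t in (0:ℝ)..1, h t := by
  apply intervalIntegral.integral_congr
  intro t ht
  rw [uIcc_of_le zero_le_one] at ht
  exact H t ht.1 ht.2

/-- Generic summation lemma. -/
theorem sum_base (g : ℝ → ℝ) (v : ℝ) (hz : ∀ x, (x ≤ 0 ∨ 2 ≤ x) → g x = 0)
    (h2 : ∀ x, 0 < x → x ≤ 1 → g x + g (x+1) = v) (K : ℕ) : ∀ x : ℝ, x ≤ 1 → 2 ≤ x + K →
    ∑ a ∈ Finset.range K, g (x + a) = v := by
  induction K with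
  | zero => intro x h h'; norm_num at h'; linarith
  | succ K ih =>
    intro x h h'
    push_cast at h'
    rw [Finset.sum_range_succ']
    by_cases hx : x ≤ 0
    · rw [show x + ((0:ℕ):ℝ) = x by simp, hz x (Or.inl hx), add_zero]
      rw [← ih (x+1) (by linarith) (by linarith)]
      refine Finset.sum_congr rfl fun a _ => ?_
      congr 1; push_cast; ring
    · push Not at hx
      rw [← h2 x hx h]
      rcases K with _ | K
      · rw [hz (x+1) (Or.inr (by norm_num at h'; linarith))]; simp
      · rw [Finset.sum_range_succ', Finset.sum_eq_zero]
        · simp [add_comm]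
        · intro a _
          apply hz
          right
          push_cast
          have : (0:ℝ) ≤ a := by positivity
          linarith

theorem NB_sum (k K : ℕ) : ∀ x : ℝ, x ≤ 1 → (k + 2 : ℝ) ≤ x + K →
    ∑ a ∈ Finset.range K, NB k (x + a) = 1 := by
  induction k with
  | zero =>
    intro x h h'
    refine sum_base (NB 0) 1 (fun x hx => NB_zero 0 x (by simpa using hx)) ?_ K x h
      (by simpa using h')
    intro x h0 h1
    unfold NB
    rw [min_eq_left (by linarith), min_eq_right (by linarith), max_eq_right (by linarith),
      max_eq_right (by linarith)]
    ring
  | succ k ih =>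
    intro x h h'
    unfold NB
    rw [← intervalIntegral.integral_finsetSum]
    · rw [int_congr' (h := fun _ => 1)]
      · simp
      · intro t h0 h1
        push_cast at h'
        rw [← ih (x - t) (by linarith) (by linarith)]
        refine Finset.sum_congr rfl fun a _ => ?_
        congr 1; ring
    · intro a _
      apply Continuous.intervalIntegrable
      exact (NB_cont k).comp (by fun_prop : Continuous fun t : ℝ => x + a - t)

theorem hat_val (v : ℝ) {x y : ℝ} (h0 : 0 ≤ v) (h1 : v ≤ x) (h2 : v ≤ y) (h3 : v ≤ 2 - x)
    (h4 : v ≤ 2 - y) (h5 : v ≤ 1 - (x - y)) (h6 : v ≤ 1 + (x - y))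
    (h : x ≤ v ∨ y ≤ v ∨ 2 - x ≤ v ∨ 2 - y ≤ v ∨ 1 - (x - y) ≤ v ∨ 1 + (x - y) ≤ v) :
    hat (x, y) = v := by
  unfold hat
  have : v ≤ min (min (min x y) (min (2 - x) (2 - y))) (min (1 - (x - y)) (1 + (x - y))) :=
    le_min (le_min (le_min h1 h2) (le_min h3 h4)) (le_min h5 h6)
  simp only
  rw [max_eq_right (h0.trans this)]
  apply le_antisymm _ this
  simp only [min_le_iff]
  tauto

theorem hat_rowsum (y x : ℝ) (h0 : 0 < x) (h1 : x ≤ 1) :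
    hat (x, y) + hat (x+1, y) = NB 0 y := by
  have hN : ∀ v, 0 ≤ v → v ≤ y → v ≤ 2 - y → (y ≤ v ∨ 2 - y ≤ v) → NB 0 y = v := by
    intro v h0 h1 h2 h3
    rw [NB, max_eq_right (le_min (by linarith) (by linarith))]
    apply le_antisymm
    · rw [min_le_iff]; exact h3
    · exact le_min h1 h2
  rcases le_total y 0 with hy | hy
  · rw [hat_zero _ _ (by tauto), hat_zero _ _ (by tauto), NB_zero _ _ (Or.inl hy), add_zero]
  rcases le_total 2 y with hy2 | hy2
  · rw [hat_zero _ _ (by tauto), hat_zero _ _ (by tauto),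
      NB_zero _ _ (Or.inr (by push_cast; linarith)), add_zero]
  rcases le_total y x with hyx | hyx
  · rw [hat_val y, hat_zero (x+1) y (by right; right; right; right; left; linarith),
      hN y, add_zero] <;>
      first
      | linarith
      | (left; linarith)
      | (right; linarith)
      | (right; left; linarith)
      | (right; right; left; linarith)
      | (right; right; right; left; linarith)
      | (right; right; right; right; left; linarith)
      | (right; right; right; right; right; linarith)
  rcases le_total y 1 with h3 | h3
  · rw [hat_val x, hat_val (y - x), hN y] <;>
      first
      | linarith
      | (left; linarith)
      | (right; linarith)
      | (right; left; linarith)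
      | (right; right; left; linarith)
      | (right; right; right; left; linarith)
      | (right; right; right; right; left; linarith)
      | (right; right; right; right; right; linarith)
  rcases le_total y (1 + x) with h4 | h4
  · rw [hat_val (1 + x - y), hat_val (1 - x), hN (2 - y)] <;>
      first
      | linarith
      | (left; linarith)
      | (right; linarith)
      | (right; left; linarith)
      | (right; right; left; linarith)
      | (right; right; right; left; linarith)
      | (right; right; right; right; left; linarith)
      | (right; right; right; right; right; linarith)
  · rw [hat_zero x y (by right; right; right; right; right; linarith), hat_val (2 - y),
      hN (2 - y)] <;>
      first
      | linarith
      | (left; linarith)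
      | (right; linarith)
      | (right; left; linarith)
      | (right; right; left; linarith)
      | (right; right; right; left; linarith)
      | (right; right; right; right; left; linarith)
      | (right; right; right; right; right; linarith)

theorem hat_symm (x y : ℝ) : hat (x, y) = hat (y, x) := by
  unfold hat
  simp only
  rw [min_comm x y, min_comm (2 - x), min_comm (1 - (x-y))]
  congr 3 <;> ring

theorem box_rowsum (i j k : ℕ) : ∀ (K : ℕ) (x y : ℝ), x ≤ 1 → (i + k + 2 : ℝ) ≤ x + K →
    ∑ a ∈ Finset.range K, boxN (i+1) (j+1) (k+1) (x + a, y) = NB (j + k) y := by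
  refine box_ind (P := fun i j k => ∀ (K : ℕ) (x y : ℝ), x ≤ 1 → (i + k + 2 : ℝ) ≤ x + K →
    ∑ a ∈ Finset.range K, boxN (i+1) (j+1) (k+1) (x + a, y) = NB (j + k) y)
      ?_ ?_ ?_ ?_ i j k
  · intro K x y h h'
    simp only [zero_add, boxN_111]
    refine sum_base (fun x => hat (x, y)) _ ?_ (hat_rowsum y) K x h (by simpa using h')
    intro x hx
    apply hat_zero
    tauto
  · intro k ih K x y h h'
    simp only [zero_add, boxN_s3, ← add_assoc]
    push_cast at h'
    rw [← intervalIntegral.integral_finsetSum]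
    · rw [NB]
      apply int_congr'
      intro t h0 h1
      have := ih K (x - t) (y - t) (by linarith) (by push_cast; linarith)
      simp only [zero_add] at this
      rw [← this]
      refine Finset.sum_congr rfl fun a _ => ?_
      congr 2; ring
    · intro a _
      apply Continuous.intervalIntegrable
      exact (box_cont 0 0 k).comp (by fun_prop : Continuous fun t : ℝ => ((x + a - t, y - t) : Pt))
  · intro j k ih K x y h h'
    simp only [zero_add, boxN_s2]
    push_cast at h'
    rw [← intervalIntegral.integral_finsetSum]
    · rw [show j + 1 + k = (j + k) + 1 by ring, NB]
      apply int_congr'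
      intro t h0 h1
      exact ih K x (y - t) (by linarith) (by push_cast; linarith)
    · intro a _
      apply Continuous.intervalIntegrable
      exact (box_cont 0 j k).comp (by fun_prop : Continuous fun t : ℝ => ((x + a, y - t) : Pt))
  · intro i j k ih K x y h h'
    simp only [boxN_s1]
    push_cast at h'
    rw [← intervalIntegral.integral_finsetSum]
    · rw [int_congr' (h := fun _ => NB (j + k) y)]
      · simp
      intro t h0 h1
      rw [← ih K (x - t) y (by linarith) (by linarith)]
      refine Finset.sum_congr rfl fun a _ => ?_
      congr 2; ring
    · intro a _
      apply Continuous.intervalIntegrable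
      exact (box_cont i j k).comp (by fun_prop : Continuous fun t : ℝ => ((x + a - t, y) : Pt))

theorem box_colsum3 (k : ℕ) : ∀ (K : ℕ) (x y : ℝ), y ≤ 1 → (k + 2 : ℝ) ≤ y + K →
    ∑ b ∈ Finset.range K, boxN 1 1 (k+1) (x, y + b) = NB k x := by
  induction k with
  | zero =>
    intro K x y h h'
    simp only [zero_add, boxN_111]
    refine sum_base (fun y => hat (x, y)) _ ?_ ?_ K y h (by simpa using h')
    · intro y hx
      apply hat_zero
      tauto
    · intro y h0 h1
      rw [hat_symm, hat_symm x]
      exact hat_rowsum x y h0 h1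
  | succ k ih =>
    intro K x y h h'
    simp only [boxN_s3]
    push_cast at h'
    rw [← intervalIntegral.integral_finsetSum]
    · rw [NB]
      apply int_congr'
      intro t h0 h1
      rw [← ih K (x - t) (y - t) (by linarith) (by linarith)]
      refine Finset.sum_congr rfl fun a _ => ?_
      congr 2; ring
    · intro a _
      apply Continuous.intervalIntegrable
      exact (box_cont 0 0 k).comp (by fun_prop : Continuous fun t : ℝ => ((x - t, y + a - t) : Pt))

theorem box_colsum (j k : ℕ) : ∀ (K : ℕ) (x y : ℝ), y ≤ 1 → (j + k + 2 : ℝ) ≤ y + K →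
    ∑ b ∈ Finset.range K, boxN 1 (j+1) (k+1) (x, y + b) = NB k x := by
  induction j with
  | zero =>
    intro K x y h h'
    exact box_colsum3 k K x y h (by simpa using h')
  | succ j ih =>
    intro K x y h h'
    simp only [boxN_s2]
    push_cast at h'
    rw [← intervalIntegral.integral_finsetSum]
    · rw [int_congr' (h := fun _ => NB k x)]
      · simp
      intro t h0 h1
      rw [← ih K x (y - t) (by linarith) (by linarith)]
      refine Finset.sum_congr rfl fun a _ => ?_
      congr 2; ring
    · intro a _
      apply Continuous.intervalIntegrable
      exact (box_cont 0 j k).comp (by fun_prop : Continuous fun t : ℝ => ((x, y + a - t) : Pt))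

theorem deriv_avg (g : ℝ → ℝ) (hg : Continuous g) (x : ℝ) :
    HasDerivAt (fun x => ∫ t in (0:ℝ)..1, g (x - t)) (g x - g (x - 1)) x := by
  have e : (fun x => ∫ t in (0:ℝ)..1, g (x - t)) =
      fun x => (∫ s in (0:ℝ)..x, g s) - ∫ s in (0:ℝ)..(x - 1), g s := by
    funext x
    rw [intervalIntegral.integral_comp_sub_left (fun s => g s) x,
      intervalIntegral.integral_interval_sub_left (hg.intervalIntegrable _ _)
        (hg.intervalIntegrable _ _)]
    simp
  rw [e]
  have h1 : ∀ x, HasDerivAt (fun x => ∫ s in (0:ℝ)..x, g s) (g x) x := fun x =>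
    intervalIntegral.integral_hasDerivAt_right (hg.intervalIntegrable _ _)
      (hg.stronglyMeasurableAtFilter _ _) hg.continuousAt
  have h2 : HasDerivAt (fun x => ∫ s in (0:ℝ)..(x - 1), g s) (g (x - 1)) x :=
    HasDerivAt.comp_sub_const x 1 (h1 (x - 1))
  exact (h1 x).sub h2

/-- Summation by parts. -/
theorem sum_parts (K : ℕ) (C : ℕ → ℝ) (G : ℝ → ℝ) (x : ℝ) (h0 : G (x - 1) = 0)
    (h1 : G (x + K) = 0) :
    ∑ a ∈ Finset.range (K+1), C a * (G (x + a) - G (x + a - 1)) =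
      ∑ a ∈ Finset.range K, (C a - C (a+1)) * G (x + a) := by
  simp only [mul_sub, sub_mul, Finset.sum_sub_distrib]
  rw [Finset.sum_range_succ, h1, mul_zero, add_zero, Finset.sum_range_succ' _ K]
  have : G (x + ((0:ℕ):ℝ) - 1) = 0 := by simpa using h0
  rw [this, mul_zero, add_zero]
  congr 1
  refine Finset.sum_congr rfl fun a _ => ?_
  congr 2; push_cast; ring

theorem const_of_succ (C : ℕ → ℝ) (m : ℕ) (M : ℕ) (h : ∀ a, m ≤ a → a < M → C a - C (a+1) = 0) :
    ∀ a, m ≤ a → a ≤ M → C a = C m := by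
  intro a ha
  induction a, ha using Nat.le_induction with
  | base => intro _; rfl
  | succ a ha ih =>
    intro h'
    have := h a ha (by omega)
    rw [← ih (by omega)]; linarith

theorem NB_indep (k : ℕ) : ∀ C : ℕ → ℝ,
    (∀ t : ℝ, 0 < t → t < 1 → ∑ b ∈ Finset.range (k+2), C b * NB k (t + b) = 0) →
    ∀ b < k + 2, C b = 0 := by
  induction k with
  | zero =>
    intro C h
    have e : ∀ t : ℝ, 0 < t → t < 1 → C 0 * t + C 1 * (1 - t) = 0 := by
      intro t h0 h1
      have := h t h0 h1
      simp only [Finset.sum_range_succ, Finset.sum_range_zero, NB] at this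
      norm_num at this
      rw [min_eq_left (by linarith), min_eq_right (by linarith), max_eq_right (by linarith),
        max_eq_right (by linarith)] at this
      linarith
    have e1 := e (1/3) (by norm_num) (by norm_num)
    have e2 := e (2/3) (by norm_num) (by norm_num)
    intro b hb
    interval_cases b <;> linarith
  | succ k ih =>
    intro C h
    have hd : ∀ b < k + 2, C b - C (b+1) = 0 := by
      apply ih
      intro t h0 h1
      rw [← sum_parts (k+2) C (NB k) t (NB_zero k _ (Or.inl (by linarith)))
        (NB_zero k _ (Or.inr (by push_cast; linarith)))]
      have d1 : HasDerivAt (fun t => ∑ b ∈ Finset.range (k+1+2), C b * NB (k+1) (t + b))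
          (∑ b ∈ Finset.range (k+1+2), C b * (NB k (t + b) - NB k (t + b - 1))) t := by
        apply HasDerivAt.fun_sum
        intro b _
        apply HasDerivAt.const_mul
        exact HasDerivAt.comp_add_const t (b:ℝ) (deriv_avg (NB k) (NB_cont k) (t + b))
      have d2 : HasDerivAt (fun t => ∑ b ∈ Finset.range (k+1+2), C b * NB (k+1) (t + b)) 0 t := by
        apply (hasDerivAt_const t (0:ℝ)).congr_of_eventuallyEq
        filter_upwards [Ioo_mem_nhds h0 h1] with s hs
        exact h s hs.1 hs.2
      exact d1.unique d2
    have hc := const_of_succ C 0 (k+2) (fun a _ ha => hd a ha)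
    have h2 := h (1/2) (by norm_num) (by norm_num)
    have h3 : ∑ b ∈ Finset.range (k+1+2), C b * NB (k+1) (1/2 + b) = C 0 := by
      rw [Finset.sum_congr rfl (g := fun b : ℕ => C 0 * NB (k+1) (1/2 + b)),
        ← Finset.mul_sum, NB_sum (k+1) _ (1/2) (by norm_num) (by push_cast; linarith), mul_one]
      intro b hb
      rw [Finset.mem_range] at hb
      rw [hc b (by omega) (by omega)]
    intro b hb
    rw [hc b (by omega) (by omega)]
    linarith

/-- Row version of the final step. -/
theorem row_final (i j k : ℕ) (c : ℕ → ℕ → ℝ)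
    (hz : ∀ t : ℝ, 0 < t → t < 1 → ∑ b ∈ Finset.range (j+k+2), ∑ a ∈ Finset.range (i+k+2),
      c a b * boxN (i+1) (j+1) (k+1) (t + a, t + b) = 0)
    (hc : ∀ a b, a + 1 < i + k + 2 → b < j + k + 2 → a + 1 ≤ b + i → b ≤ a + j →
      c a b - c (a+1) b = 0) :
    ∀ a b, a < i + k + 2 → b < j + k + 2 → a ≤ b + i → b ≤ a + j → c a b = 0 := by
  have key : ∀ a b, a < i + k + 2 → b < j + k + 2 → a ≤ b + i → b ≤ a + j →
      c a b = c (b - j) b := by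
    intro a b h1 h2 h3 h4
    exact const_of_succ (fun a => c a b) (b - j) a
      (fun a' h h' => hc a' b (by omega) h2 (by omega) (by omega)) a (by omega) le_rfl
  have hC : ∀ b < j + k + 2, c (b - j) b = 0 := by
    apply NB_indep (j+k) (fun b => c (b - j) b)
    intro t h0 h1
    rw [← hz t h0 h1]
    refine Finset.sum_congr rfl fun b hb => ?_
    rw [Finset.mem_range] at hb
    rw [← box_rowsum i j k (i+k+2) t (t + b) h1.le (by push_cast; linarith), Finset.mul_sum]
    refine Finset.sum_congr rfl fun a ha => ?_
    rw [Finset.mem_range] at ha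
    by_cases h3 : a ≤ b + i
    · by_cases h4 : b ≤ a + j
      · rw [key a b ha hb h3 h4]
      · have : (a:ℝ) + j + 1 ≤ b := by exact_mod_cast (by omega : a + j + 1 ≤ b)
        rw [box_zero i j k _ _ (by right; right; right; right; right; linarith)]; simp
    · have : (b:ℝ) + i + 1 ≤ a := by exact_mod_cast (by omega : b + i + 1 ≤ a)
      rw [box_zero i j k _ _ (by right; right; right; right; left; linarith)]; simp
  intro a b h1 h2 h3 h4
  rw [key a b h1 h2 h3 h4, hC b h2]

/-- Column version of the final step. -/
theorem col_final (j k : ℕ) (c : ℕ → ℕ → ℝ)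
    (hz : ∀ t : ℝ, 0 < t → t < 1 → ∑ a ∈ Finset.range (k+2), ∑ b ∈ Finset.range (j+k+2),
      c a b * boxN 1 (j+1) (k+1) (t + a, t + b) = 0)
    (hc : ∀ a b, a < k + 2 → b + 1 < j + k + 2 → a ≤ b → b + 1 ≤ a + j →
      c a b - c a (b+1) = 0) :
    ∀ a b, a < k + 2 → b < j + k + 2 → a ≤ b → b ≤ a + j → c a b = 0 := by
  have key : ∀ a b, a < k + 2 → b < j + k + 2 → a ≤ b → b ≤ a + j →
      c a b = c a a := by
    intro a b h1 h2 h3 h4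
    exact const_of_succ (fun b => c a b) a b
      (fun b' h h' => hc a b' h1 (by omega) (by omega) (by omega)) b (by omega) le_rfl
  have hC : ∀ a < k + 2, c a a = 0 := by
    apply NB_indep k (fun a => c a a)
    intro t h0 h1
    rw [← hz t h0 h1]
    refine Finset.sum_congr rfl fun a ha => ?_
    rw [Finset.mem_range] at ha
    rw [← box_colsum j k (j+k+2) (t + a) t h1.le (by push_cast; linarith), Finset.mul_sum]
    refine Finset.sum_congr rfl fun b hb => ?_
    rw [Finset.mem_range] at hb
    by_cases h3 : a ≤ b
    · by_cases h4 : b ≤ a + j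
      · rw [key a b ha hb h3 h4]
      · have : (a:ℝ) + j + 1 ≤ b := by exact_mod_cast (by omega : a + j + 1 ≤ b)
        have := box_zero 0 j k (t + a) (t + b) (by right; right; right; right; right; linarith)
        rw [zero_add] at this
        rw [this]; simp
    · have : (b:ℝ) + 1 ≤ a := by exact_mod_cast (by omega : b + 1 ≤ a)
      have := box_zero 0 j k (t + a) (t + b)
        (by right; right; right; right; left; push_cast; linarith)
      rw [zero_add] at this
      rw [this]; simp
  intro a b h1 h2 h3 h4
  rw [key a b h1 h2 h3 h4, hC a h1]

theorem evalP_deriv0 (f : BPoly) (x y : ℝ) :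
    HasDerivAt (fun x => evalP f (x, y)) (evalP (pderiv 0 f) (x, y)) x := by
  unfold evalP
  induction f using MvPolynomial.induction_on with
  | C a => simpa using hasDerivAt_const x a
  | add p q hp hq => simpa using hp.fun_add hq
  | mul_X p n hp =>
    have hX : HasDerivAt (fun x => eval ![x, y] (X n : BPoly))
        (eval ![x, y] (pderiv 0 (X n : BPoly))) x := by
      fin_cases n
      · simpa using hasDerivAt_id' x
      · simpa [pderiv_X] using hasDerivAt_const x y
    have := hp.fun_mul hX
    simp only [map_mul, Derivation.leibniz, smul_eq_mul, map_add] at this ⊢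
    rw [add_comm, mul_comm (eval ![x, y] (X n))]
    exact this

theorem evalP_deriv1 (f : BPoly) (x y : ℝ) :
    HasDerivAt (fun y => evalP f (x, y)) (evalP (pderiv 1 f) (x, y)) y := by
  unfold evalP
  induction f using MvPolynomial.induction_on with
  | C a => simpa using hasDerivAt_const y a
  | add p q hp hq => simpa using hp.fun_add hq
  | mul_X p n hp =>
    have hX : HasDerivAt (fun y => eval ![x, y] (X n : BPoly))
        (eval ![x, y] (pderiv 1 (X n : BPoly))) y := by
      fin_cases n
      · simpa [pderiv_X] using hasDerivAt_const y x
      · simpa using hasDerivAt_id' y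
    have := hp.fun_mul hX
    simp only [map_mul, Derivation.leibniz, smul_eq_mul, map_add] at this ⊢
    rw [add_comm, mul_comm (eval ![x, y] (X n))]
    exact this

theorem div_deriv (e : Fin 2) (m : ℕ) (f : BPoly) (h : (X 0 - X 1 : BPoly) ^ (m + 1) ∣ f) :
    (X 0 - X 1 : BPoly) ^ m ∣ pderiv e f := by
  obtain ⟨q, rfl⟩ := h
  rw [Derivation.leibniz, Derivation.leibniz_pow]
  simp only [smul_eq_mul, nsmul_eq_mul, Nat.add_sub_cancel]
  refine dvd_add ?_ ?_
  · exact Dvd.dvd.mul_right (pow_dvd_pow _ (Nat.le_succ m)) _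
  · refine Dvd.dvd.mul_left (Dvd.dvd.mul_left (Dvd.dvd.mul_right dvd_rfl _) _) _

/-- The representation hypothesis in natural-number coordinates. -/
def BRep (i j k : ℕ) (f : BPoly) (c : ℕ → ℕ → ℝ) : Prop :=
  ∀ x y : ℝ, 0 < y → y < x → x < 1 → evalP f (x, y) =
    ∑ b ∈ Finset.range (j+k+2), ∑ a ∈ Finset.range (i+k+2),
      c a b * boxN (i+1) (j+1) (k+1) (x + a, y + b)

theorem diag_zero (i j k : ℕ) (f : BPoly) (c : ℕ → ℕ → ℝ) (h : BRep i j k f c)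
    (hd : (X 0 - X 1 : BPoly) ∣ f) (t : ℝ) (h0 : 0 < t) (h1 : t < 1) :
    ∑ b ∈ Finset.range (j+k+2), ∑ a ∈ Finset.range (i+k+2),
      c a b * boxN (i+1) (j+1) (k+1) (t + a, t + b) = 0 := by
  have hf : evalP f (t, t) = 0 := by
    obtain ⟨q, rfl⟩ := hd
    simp [evalP]
  rw [← hf]
  symm
  have E : EqOn (fun x => evalP f (x, t)) (fun x => ∑ b ∈ Finset.range (j+k+2),
      ∑ a ∈ Finset.range (i+k+2), c a b * boxN (i+1) (j+1) (k+1) (x + a, t + b)) (Ioo t 1) :=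
    fun x hx => h x t h0 hx.1 hx.2
  have E2 := E.closure
    (continuous_iff_continuousAt.2 fun x => (evalP_deriv0 f x t).continuousAt) (by
      refine continuous_finsetSum _ fun b _ => continuous_finsetSum _ fun a _ => ?_
      exact continuous_const.mul ((box_cont i j k).comp
        (by fun_prop : Continuous fun x : ℝ => ((x + a, t + b) : Pt))))
  rw [closure_Ioo h1.ne] at E2
  exact E2 ⟨le_rfl, h1.le⟩

theorem BRep.d1 {i j k : ℕ} {f : BPoly} {c : ℕ → ℕ → ℝ} (h : BRep (i+1) j k f c) :
    BRep i j k (pderiv 0 f) (fun a b => c a b - c (a+1) b) := by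
  intro x y h0 hxy h1
  have d1 : HasDerivAt (fun x => ∑ b ∈ Finset.range (j+k+2),
      ∑ a ∈ Finset.range (i+1+k+2), c a b * boxN (i+1+1) (j+1) (k+1) (x + a, y + b))
      (∑ b ∈ Finset.range (j+k+2), ∑ a ∈ Finset.range (i+1+k+2), c a b *
        (boxN (i+1) (j+1) (k+1) (x + a, y + b) - boxN (i+1) (j+1) (k+1) (x + a - 1, y + b))) x := by
    refine HasDerivAt.fun_sum fun b _ => HasDerivAt.fun_sum fun a _ => ?_
    apply HasDerivAt.const_mul
    simp only [boxN_s1]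
    exact HasDerivAt.comp_add_const x (a:ℝ)
      (deriv_avg (fun x => boxN (i+1) (j+1) (k+1) (x, y + b)) ((box_cont i j k).comp
        (by fun_prop : Continuous fun x : ℝ => ((x, y + b) : Pt))) (x + a))
  have d2 := (evalP_deriv0 f x y).congr_of_eventuallyEq (f₁ := fun x =>
      ∑ b ∈ Finset.range (j+k+2),
      ∑ a ∈ Finset.range (i+1+k+2), c a b * boxN (i+1+1) (j+1) (k+1) (x + a, y + b)) (by
    filter_upwards [Ioo_mem_nhds hxy h1] with s hs
    exact (h s y h0 hs.1 hs.2).symm)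
  rw [d2.unique d1]
  refine Finset.sum_congr rfl fun b _ => ?_
  rw [show i+1+k+2 = (i+k+2)+1 by ring]
  exact sum_parts (i+k+2) (fun a => c a b) (fun x => boxN (i+1) (j+1) (k+1) (x, y + b)) x
    (box_zero _ _ _ _ _ (by left; linarith))
    (box_zero _ _ _ _ _ (by right; left; push_cast; linarith))

theorem BRep.d2 {j k : ℕ} {f : BPoly} {c : ℕ → ℕ → ℝ} (h : BRep 0 (j+1) k f c) :
    BRep 0 j k (pderiv 1 f) (fun a b => c a b - c a (b+1)) := by
  intro x y h0 hxy h1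
  have d1 : HasDerivAt (fun y => ∑ b ∈ Finset.range (j+1+k+2),
      ∑ a ∈ Finset.range (0+k+2), c a b * boxN (0+1) (j+1+1) (k+1) (x + a, y + b))
      (∑ b ∈ Finset.range (j+1+k+2), ∑ a ∈ Finset.range (0+k+2), c a b *
        (boxN (0+1) (j+1) (k+1) (x + a, y + b) - boxN (0+1) (j+1) (k+1) (x + a, y + b - 1))) y := by
    refine HasDerivAt.fun_sum fun b _ => HasDerivAt.fun_sum fun a _ => ?_
    apply HasDerivAt.const_mul
    simp only [zero_add, boxN_s2]
    exact HasDerivAt.comp_add_const y (b:ℝ)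
      (deriv_avg (fun y => boxN 1 (j+1) (k+1) (x + a, y)) ((box_cont 0 j k).comp
        (by fun_prop : Continuous fun y : ℝ => ((x + a, y) : Pt))) (y + b))
  have d2 := (evalP_deriv1 f x y).congr_of_eventuallyEq (f₁ := fun y =>
      ∑ b ∈ Finset.range (j+1+k+2),
      ∑ a ∈ Finset.range (0+k+2), c a b * boxN (0+1) (j+1+1) (k+1) (x + a, y + b)) (by
    filter_upwards [Ioo_mem_nhds h0 hxy] with s hs
    exact (h x s hs.1 hs.2 h1).symm)
  rw [d2.unique d1, Finset.sum_comm]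
  rw [Finset.sum_comm (s := Finset.range (j+k+2))]
  refine Finset.sum_congr rfl fun a _ => ?_
  rw [show j+1+k+2 = (j+k+2)+1 by ring]
  exact sum_parts (j+k+2) (fun b => c a b) (fun y => boxN (0+1) (j+1) (k+1) (x + a, y)) y
    (box_zero _ _ _ _ _ (by right; right; left; linarith))
    (box_zero _ _ _ _ _ (by right; right; right; left; push_cast; linarith))

theorem main_ind (i j k : ℕ) : ∀ (f : BPoly) (c : ℕ → ℕ → ℝ), BRep i j k f c →
    (X 0 - X 1 : BPoly) ^ (i + j + 1) ∣ f →
    ∀ a b, a < i + k + 2 → b < j + k + 2 → a ≤ b + i → b ≤ a + j → c a b = 0 := by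
  have hd1 : ∀ (m : ℕ) (f : BPoly), (X 0 - X 1 : BPoly) ^ (m + 1) ∣ f →
      (X 0 - X 1 : BPoly) ∣ f := fun m f h => (dvd_pow_self _ (Nat.succ_ne_zero m)).trans h
  induction i with
  | succ i ih =>
    intro f c h hd
    apply row_final (i+1) j k c (diag_zero _ _ _ f c h (hd1 _ f hd))
    intro a b h1 h2 h3 h4
    refine ih (pderiv 0 f) _ h.d1 (div_deriv 0 _ f ?_) a b (by omega) h2 (by omega) h4
    rwa [show i + j + 1 + 1 = i + 1 + j + 1 by ring]
  | zero =>
    induction j with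
    | succ j ih =>
      intro f c h hd a b h1 h2 h3 h4
      refine col_final (j+1) k c ?_ ?_ a b (by omega) h2 h3 h4
      · intro t h0 h1
        rw [Finset.sum_comm]
        have := diag_zero _ _ _ f c h (hd1 _ f hd) t h0 h1
        rw [zero_add, zero_add] at this
        exact this
      · intro a b h1 h2 h3 h4
        refine ih (pderiv 1 f) _ h.d2 (div_deriv 1 _ f ?_) a b (by omega) (by omega)
          (by omega) (by omega)
        rwa [show 0 + j + 1 + 1 = 0 + (j + 1) + 1 by ring]
    | zero =>
      intro f c h hd
      apply row_final 0 0 k c (diag_zero _ _ _ f c h (hd1 _ f hd))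
      intro a b h1 h2 h3 h4
      omega

theorem active_low {i j k : ℕ} {w : ℤ × ℤ}
    (h : w ∈ activeSet (i+1) (j+1) (k+1) ⟨(0, 0), false⟩) :
    ∃ a b : ℕ, w = (-(a:ℤ), -(b:ℤ)) ∧ a < i + k + 2 ∧ b < j + k + 2 ∧ a ≤ b + i := by
  obtain ⟨w1, w2⟩ := w
  simp only [activeSet, Tri.toSet, mem_ofPred_eq, not_forall, trBox] at h
  obtain ⟨⟨x, y⟩, hp, hne⟩ := h
  simp only [Bool.false_eq_true, if_false, mem_ofPred_eq, Int.cast_zero, sub_zero, zero_add] at hp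
  obtain ⟨h0, hxy, h1⟩ := hp
  have hz := mt (box_zero i j k (x - w1) (y - w2)) hne
  push Not at hz
  obtain ⟨z1, z2, z3, z4, z5, z6⟩ := hz
  have g1 : w1 < 1 := by exact_mod_cast (by linarith : (w1:ℝ) < 1)
  have g2 : w2 < 1 := by exact_mod_cast (by linarith : (w2:ℝ) < 1)
  have g3 : -w1 < i + k + 2 := by exact_mod_cast (by linarith : -(w1:ℝ) < i + k + 2)
  have g4 : -w2 < j + k + 2 := by exact_mod_cast (by linarith : -(w2:ℝ) < j + k + 2)
  have g5 : -w1 + w2 < i + 1 := by exact_mod_cast (by linarith : -(w1:ℝ) + w2 < i + 1)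
  refine ⟨(-w1).toNat, (-w2).toNat, ?_, ?_, ?_, ?_⟩
  · ext <;> simp <;> omega
  all_goals omega

theorem active_up {i j k : ℕ} {a b : ℕ}
    (h : (-(a:ℤ), -(b:ℤ)) ∈ activeSet (i+1) (j+1) (k+1) ⟨(0, 0), true⟩) : b ≤ a + j := by
  simp only [activeSet, Tri.toSet, mem_ofPred_eq, not_forall, trBox] at h
  obtain ⟨⟨x, y⟩, hp, hne⟩ := h
  simp only [if_true, mem_ofPred_eq, Int.cast_zero, sub_zero, zero_add] at hp
  obtain ⟨h0, hxy, h1⟩ := hp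
  have hz := mt (box_zero i j k _ _) hne
  push Not at hz
  obtain ⟨z1, z2, z3, z4, z5, z6⟩ := hz
  push_cast at z6
  have : b < a + j + 1 := by exact_mod_cast (by linarith : (b:ℝ) < a + j + 1)
  omega

theorem rep_of {i j k : ℕ} {f : BPoly} {c : (ℤ × ℤ) →₀ ℝ}
    (hc : Represents (i+1) (j+1) (k+1) ⟨(0, 0), false⟩ f c) :
    BRep i j k f (fun a b => c (-(a:ℤ), -(b:ℤ))) := by
  intro x y h0 hxy h1
  rw [hc.2 (x, y) (by simp [Tri.toSet]; exact ⟨h0, hxy, h1⟩)]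
  let φ : ℕ × ℕ → ℤ × ℤ := fun q => (-(q.2:ℤ), -(q.1:ℤ))
  have hφ : Function.Injective φ := by
    rintro ⟨a, b⟩ ⟨a', b'⟩ h
    simp only [φ, Prod.mk.injEq, neg_inj, Nat.cast_inj] at h
    ext <;> simp [h]
  have hs : c.support ⊆
      (Finset.range (j+k+2) ×ˢ Finset.range (i+k+2)).map ⟨φ, hφ⟩ := by
    intro w hw
    obtain ⟨a, b, rfl, ha, hb, _⟩ := active_low (hc.1 hw)
    rw [Finset.mem_map]
    exact ⟨(b, a), by simp [ha, hb], rfl⟩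
  rw [Finsupp.sum_of_support_subset c hs _ (by simp), Finset.sum_map, Finset.sum_product]
  refine Finset.sum_congr rfl fun b _ => Finset.sum_congr rfl fun a _ => ?_
  simp [φ, trBox]

/-- Let `△` be the lower triangle with vertices
`(0,0), (1,0), (1,1)` and `△'` the adjacent upper triangle with vertices
`(0,0), (0,1), (1,1)`.  If `f ∈ V_n` is divisible by `(x-y)^{n₁+n₂-1}` then all
coefficients of `f` on the translates active on both triangles vanish. -/
theorem statement4 (n₁ n₂ n₃ : ℕ) (h₁ : 1 ≤ n₁) (h₂ : 1 ≤ n₂) (h₃ : 1 ≤ n₃)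
    (f : BPoly) (c : (ℤ × ℤ) →₀ ℝ)
    (hc : Represents n₁ n₂ n₃ ⟨(0, 0), false⟩ f c)
    (hdiv : (X 0 - X 1 : BPoly) ^ (n₁ + n₂ - 1) ∣ f) :
    ∀ w ∈ activeSet n₁ n₂ n₃ ⟨(0, 0), false⟩ ∩ activeSet n₁ n₂ n₃ ⟨(0, 0), true⟩,
      c w = 0 := by
  obtain ⟨i, rfl⟩ := Nat.exists_eq_add_of_le' h₁
  obtain ⟨j, rfl⟩ := Nat.exists_eq_add_of_le' h₂
  obtain ⟨k, rfl⟩ := Nat.exists_eq_add_of_le' h₃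
  rintro w ⟨hw, hw'⟩
  obtain ⟨a, b, rfl, ha, hb, hab⟩ := active_low hw
  refine main_ind i j k f (fun a b => c (-(a:ℤ), -(b:ℤ))) (rep_of hc) ?_ a b ha hb hab (active_up hw')
  rwa [show i + 1 + (j + 1) - 1 = i + j + 1 by omega] at hdiv

end
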